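/- Let X be a complex Banach space with dim X > 2, let 𝒩 be a non-trivial nest on X, and let 𝒜 be a subalgebra of Alg 𝒩 satisfying (♠1)–(♠6) with dim X_-^⊥(𝒜) > 1. Then for every n ≥ 2 and every Lie n-derivation L : 𝒜 → B(X) there exist a derivation D : 𝒜 → B(X) and a linear map H : 𝒜 → ℂI vanishing on every (n−1)-th commutator p_n(A_1,…,A_n) with A_1,…,A_n ∈ 𝒜 such that L = D + H; moreover, if L is continuous then D and H can be chosen continuous. -/

import Mathlib

open scoped Classical

set_option synthInstance.maxHeartbeats 1000000
set_option maxHeartbeats 1000000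

noncomputable section

/-- The `(n-1)`-th commutator polynomial `p_n(x_1, …, x_n)`, defined recursively by
`p_1(x_1) = x_1` and `p_k(x_1, …, x_k) = [p_{k-1}(x_1, …, x_{k-1}), x_k]`. -/
def commPoly {A : Type*} [NonUnitalNonAssocRing A] : (n : ℕ) → (Fin n → A) → A
  | 0, _ => 0
  | 1, a => a 0
  | n + 2, a =>
      commPoly (n + 1) (fun i => a i.castSucc) * a (Fin.last (n + 1)) -
        a (Fin.last (n + 1)) * commPoly (n + 1) (fun i => a i.castSucc)

/-- A nest of closed subspaces of `X`: it contains `{0}` and `X`, is totally ordered by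
inclusion, is closed under arbitrary intersections, and contains the norm-closed linear
span of the union of any subfamily. -/
structure IsNest {X : Type*} [NormedAddCommGroup X] [NormedSpace ℂ X]
    (𝒩 : Set (Submodule ℂ X)) : Prop where
  closed : ∀ N ∈ 𝒩, IsClosed (N : Set X)
  bot_mem : (⊥ : Submodule ℂ X) ∈ 𝒩
  top_mem : (⊤ : Submodule ℂ X) ∈ 𝒩
  total : ∀ N₁ ∈ 𝒩, ∀ N₂ ∈ 𝒩, N₁ ≤ N₂ ∨ N₂ ≤ N₁
  sInf_mem : ∀ S ⊆ 𝒩, sInf S ∈ 𝒩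
  closure_sSup_mem : ∀ S ⊆ 𝒩, (sSup S).topologicalClosure ∈ 𝒩

/-- The nest algebra `Alg 𝒩` of all bounded operators leaving every member of `𝒩`
invariant. -/
def nestAlgebra {X : Type*} [NormedAddCommGroup X] [NormedSpace ℂ X]
    (𝒩 : Set (Submodule ℂ X)) : Subalgebra ℂ (X →L[ℂ] X) where
  carrier := {T : X →L[ℂ] X | ∀ N ∈ 𝒩, ∀ x ∈ N, T x ∈ N}
  mul_mem' := fun {a b} ha hb N hN x hx => ha N hN _ (hb N hN x hx)
  one_mem' := fun N _ x hx => hx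
  add_mem' := fun {a b} ha hb N hN x hx => N.add_mem (ha N hN x hx) (hb N hN x hx)
  zero_mem' := fun N _ _ _ => N.zero_mem
  algebraMap_mem' := fun r N hN x hx => by
    simpa [Algebra.algebraMap_eq_smul_one] using N.smul_mem r hx

/-- `X₋` : the norm-closed linear span of the union of all members of `𝒩` different
from `X`. -/
def nestXminus {X : Type*} [NormedAddCommGroup X] [NormedSpace ℂ X]
    (𝒩 : Set (Submodule ℂ X)) : Submodule ℂ X :=
  (sSup {N | N ∈ 𝒩 ∧ N ≠ (⊤ : Submodule ℂ X)}).topologicalClosure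

/-- The annihilator of a subspace `S` of `X` inside the continuous dual `X*`. -/
def annihilatorOf {X : Type*} [NormedAddCommGroup X] [NormedSpace ℂ X]
    (S : Submodule ℂ X) : Submodule ℂ (X →L[ℂ] ℂ) where
  carrier := {f | ∀ x ∈ S, f x = 0}
  add_mem' := fun {f g} hf hg x hx => by simp [hf x hx, hg x hx]
  zero_mem' := fun x _ => by simp
  smul_mem' := fun c f hf x hx => by simp [hf x hx]

/-- `X(𝒜)` : the set of `x ∈ X` such that `x ⊗ f ∈ 𝒜` for some nonzero `f ∈ X*`.
Here `x ⊗ f` is the rank-one operator `y ↦ f(y) x`, i.e. `f.smulRight x`. -/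
def XofA {X : Type*} [NormedAddCommGroup X] [NormedSpace ℂ X]
    (𝒜 : NonUnitalSubalgebra ℂ (X →L[ℂ] X)) : Set X :=
  {x | ∃ f : X →L[ℂ] ℂ, f ≠ 0 ∧ f.smulRight x ∈ 𝒜}

/-- `X₋^⊥(𝒜)` : the set of `f ∈ X₋^⊥` such that `x ⊗ f ∈ 𝒜` for some nonzero
`x ∈ X`. -/
def XannA {X : Type*} [NormedAddCommGroup X] [NormedSpace ℂ X]
    (𝒩 : Set (Submodule ℂ X)) (𝒜 : NonUnitalSubalgebra ℂ (X →L[ℂ] X)) :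
    Set (X →L[ℂ] ℂ) :=
  {f | (∀ x ∈ nestXminus 𝒩, f x = 0) ∧ ∃ x : X, x ≠ 0 ∧ f.smulRight x ∈ 𝒜}

/-- `L` is a Lie `n`-derivation from the (not necessarily unital) subalgebra `𝒜` of
`B(X)` into `B(X)`. -/
def IsLieNDerivNU {X : Type*} [NormedAddCommGroup X] [NormedSpace ℂ X]
    (𝒜 : NonUnitalSubalgebra ℂ (X →L[ℂ] X)) (n : ℕ)
    (L : ↥𝒜 →ₗ[ℂ] (X →L[ℂ] X)) : Prop :=
  ∀ a : Fin n → ↥𝒜,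
    L (commPoly n a) =
      ∑ k : Fin n,
        commPoly n (Function.update (fun i => ((a i : X →L[ℂ] X))) k (L (a k)))

/-- `D` is an (associative) derivation from the (not necessarily unital) subalgebra `𝒜`
of `B(X)` into `B(X)`. -/
def IsDerivOnNU {X : Type*} [NormedAddCommGroup X] [NormedSpace ℂ X]
    (𝒜 : NonUnitalSubalgebra ℂ (X →L[ℂ] X))
    (D : ↥𝒜 →ₗ[ℂ] (X →L[ℂ] X)) : Prop :=
  ∀ a b : ↥𝒜, D (a * b) = D a * (b : X →L[ℂ] X) + (a : X →L[ℂ] X) * D b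

/-- Left-normed iterated commutator `[…[[a 0, a 1], a 2], …, a k]` of a sequence. -/
def iterComm {R : Type*} [NonUnitalRing R] (a : ℕ → R) : ℕ → R
  | 0 => a 0
  | k + 1 => iterComm a k * a (k + 1) - a (k + 1) * iterComm a k

/-- The derivative of `iterComm` at the sequence `a` in the direction of the sequence `b`. -/
def iterCommDeriv {R : Type*} [NonUnitalRing R] (a b : ℕ → R) : ℕ → R
  | 0 => b 0
  | k + 1 => (iterCommDeriv a b k * a (k + 1) - a (k + 1) * iterCommDeriv a b k) +
      (iterComm a k * b (k + 1) - b (k + 1) * iterComm a k)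

section IterComm

section NonUnital

variable {R : Type*} [NonUnitalRing R]

theorem commPoly_eq_iterComm (a : ℕ → R) (k : ℕ) :
    commPoly (k + 1) (fun i : Fin (k + 1) => a i) = iterComm a k := by
  induction k with
  | zero => rfl
  | succ k ih => simp [commPoly, iterComm, ih]

theorem sum_commPoly_update_eq_iterCommDeriv (a b : ℕ → R) (k : ℕ) :
    ∑ j : Fin (k + 1), commPoly (k + 1) (Function.update (fun i : Fin (k + 1) => a i) j (b j)) =
      iterCommDeriv a b k := by
  induction k with
  | zero => simp [commPoly, iterCommDeriv]
  | succ k ih =>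
    have hlast : ∀ j : Fin (k + 1), Fin.last (k + 1) ≠ j.castSucc :=
      fun j => (Fin.castSucc_lt_last j).ne'
    have hcast : ∀ j : Fin (k + 1), (fun i : Fin (k + 1) =>
        Function.update (fun i : Fin (k + 2) => a i) j.castSucc (b j) i.castSucc) =
        Function.update (fun i : Fin (k + 1) => a i) j (b j) := by
      intro j
      funext i
      by_cases h : i = j
      · subst h; simp
      · simp [Function.update_of_ne, h]
    have hlast' : (fun i : Fin (k + 1) =>
        Function.update (fun i : Fin (k + 2) => a i) (Fin.last (k + 1)) (b (k + 1)) i.castSucc) =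
        fun i : Fin (k + 1) => a i := by
      funext i
      rw [Function.update_of_ne (hlast i).symm]
      simp
    rw [Fin.sum_univ_castSucc]
    simp only [commPoly, Fin.val_castSucc, Fin.val_last, Function.update_self, hcast, hlast',
      Function.update_of_ne (hlast _), commPoly_eq_iterComm]
    rw [Finset.sum_sub_distrib, ← Finset.sum_mul, ← Finset.mul_sum, ih]
    rfl

theorem map_iterComm {R' : Type*} [NonUnitalRing R'] (φ : R →ₙ+* R') (a : ℕ → R) (k : ℕ) :
    φ (iterComm a k) = iterComm (fun i => φ (a i)) k := by
  induction k with
  | zero => rfl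
  | succ k ih => simp [iterComm, ih]

theorem map_iterCommDeriv {R' : Type*} [NonUnitalRing R'] (φ : R →ₙ+* R') (a b : ℕ → R)
    (k : ℕ) :
    φ (iterCommDeriv a b k) = iterCommDeriv (fun i => φ (a i)) (fun i => φ (b i)) k := by
  induction k with
  | zero => rfl
  | succ k ih => simp [iterCommDeriv, ih, map_iterComm]

end NonUnital

variable {R : Type*} [Ring R]

theorem iterCommDeriv_sub (a b c : ℕ → R) (k : ℕ) :
    iterCommDeriv a (fun i => b i - c i) k = iterCommDeriv a b k - iterCommDeriv a c k := by
  induction k with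
  | zero => rfl
  | succ k ih => simp only [iterCommDeriv, ih]; noncomm_ring

theorem iterCommDeriv_inner (T : R) (a : ℕ → R) (k : ℕ) :
    iterCommDeriv a (fun i => T * a i - a i * T) k = T * iterComm a k - iterComm a k * T := by
  induction k with
  | zero => rfl
  | succ k ih => simp only [iterCommDeriv, iterComm, ih]; noncomm_ring

theorem iterCommDeriv_central (a b : ℕ → R) (hb : ∀ i x, b i * x = x * b i) (k : ℕ) :
    iterCommDeriv a b (k + 1) = 0 := by
  induction k with
  | zero => simp [iterCommDeriv, iterComm, hb]
  | succ k ih => rw [iterCommDeriv, ih]; simp [hb]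

end IterComm

section Core

variable {K V : Type*} [Field K] [AddCommGroup V] [Module K V]

/-- The inner derivation `M ↦ M e - e M`. -/
def rightComm (e : Module.End K V) : Module.End K (Module.End K V) :=
  LinearMap.mulRight K e - LinearMap.mulLeft K e

theorem rightComm_apply (e M : Module.End K V) : rightComm e M = M * e - e * M := rfl

theorem rightComm_pow_fixed {e M : Module.End K V} (h : rightComm e M = M) (k : ℕ) :
    (rightComm e ^ k) M = M := by
  induction k with
  | zero => rfl
  | succ k ih => rw [pow_succ, Module.End.mul_apply, h, ih]

theorem rightComm_pow_neg {e M : Module.End K V} (h : rightComm e M = -M) (k : ℕ) :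
    (rightComm e ^ k) M = (-1 : K) ^ k • M := by
  induction k with
  | zero => simp
  | succ k ih => rw [pow_succ, Module.End.mul_apply, h, map_neg, ih, pow_succ]; simp

theorem rightComm_cube {e : Module.End K V} (he : e * e = e) (M : Module.End K V) :
    rightComm e (rightComm e (rightComm e M)) = rightComm e M := by
  simp only [rightComm_apply]
  have h1 : ∀ Z, e * (e * Z) = e * Z := fun Z => by rw [← mul_assoc, he]
  simp only [mul_sub, sub_mul, mul_assoc, he, h1]
  noncomm_ring

theorem rightComm_eq_zero_of_pow {e M : Module.End K V} (he : e * e = e) (k : ℕ)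
    (h : (rightComm e ^ (k + 1)) M = 0) : rightComm e M = 0 := by
  induction k with
  | zero => simpa using h
  | succ k ih =>
    apply ih
    rw [pow_succ', pow_succ', Module.End.mul_apply, Module.End.mul_apply] at h
    rw [pow_succ', Module.End.mul_apply, ← rightComm_cube he, h, map_zero]

/-- The Lie derivation identity of order `k + 1` for `L` on a subset of a ring. -/
def IsIterCommDerivOn {R : Type*} [Ring R] (S : Set R) (L : R → R) (k : ℕ) : Prop :=
  ∀ a : ℕ → R, (∀ i, a i ∈ S) → L (iterComm a k) = iterCommDeriv a (fun i => L (a i)) k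

theorem IsIterCommDerivOn.sub_inner {S : Set (Module.End K V)}
    {L : Module.End K V →ₗ[K] Module.End K V} {k : ℕ}
    (hL : IsIterCommDerivOn S L k) (T : Module.End K V) :
    IsIterCommDerivOn S ⇑(L + rightComm T) k := by
  intro a ha
  have h := iterCommDeriv_sub a (fun i => L (a i)) (fun i => T * a i - a i * T) k
  rw [iterCommDeriv_inner, ← hL a ha] at h
  simp only [LinearMap.add_apply, rightComm_apply]
  convert h.symm using 1
  · abel
  · congr 1; funext i; abel

/-- The sequence `a, b, c, e, e, …`. -/
def quadSeq {R : Type*} (a b c e : R) : ℕ → R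
  | 0 => a
  | 1 => b
  | 2 => c
  | _ + 3 => e

theorem iterComm_quadSeq (a b c e : Module.End K V) (N : ℕ) :
    iterComm (quadSeq a b c e) (N + 2) =
      (rightComm e ^ N) ((a * b - b * a) * c - c * (a * b - b * a)) := by
  induction N with
  | zero => rfl
  | succ N ih => rw [pow_succ', Module.End.mul_apply, ← ih]; rfl

theorem IsIterCommDerivOn.map_rightComm_pow {S : Set (Module.End K V)}
    {L : Module.End K V →ₗ[K] Module.End K V} {N : ℕ}
    (hL : IsIterCommDerivOn S L (N + 2)) {e : Module.End K V} (heS : e ∈ S) {t : K}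
    (ht : L e = t • 1) {a b c : Module.End K V} (ha : a ∈ S) (hb : b ∈ S) (hc : c ∈ S) :
    L ((rightComm e ^ N) ((a * b - b * a) * c - c * (a * b - b * a))) =
      (rightComm e ^ N) (((L a * b - b * L a) * c - c * (L a * b - b * L a)) +
        ((a * L b - L b * a) * c - c * (a * L b - L b * a)) +
        ((a * b - b * a) * L c - L c * (a * b - b * a))) := by
  have hS : ∀ i, quadSeq a b c e i ∈ S := by
    rintro (_ | _ | _ | i) <;> assumption
  rw [← iterComm_quadSeq, hL _ hS]
  have key : ∀ m, iterCommDeriv (quadSeq a b c e) (fun i => L (quadSeq a b c e i)) (m + 2) =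
      (rightComm e ^ m) (((L a * b - b * L a) * c - c * (L a * b - b * L a)) +
        ((a * L b - L b * a) * c - c * (a * L b - L b * a)) +
        ((a * b - b * a) * L c - L c * (a * b - b * a))) := by
    intro m
    induction m with
    | zero =>
      simp only [iterCommDeriv, iterComm, quadSeq, pow_zero, Module.End.one_apply]
      noncomm_ring
    | succ m ih =>
      rw [pow_succ', Module.End.mul_apply, ← ih, iterCommDeriv]
      simp only [quadSeq, ht, rightComm_apply]
      simp
  exact key N

theorem iterCommDeriv_quadSeq_eigen {L : Module.End K V →ₗ[K] Module.End K V}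
    {a e w : Module.End K V}
    (ha : rightComm e a = a) (hw : rightComm e w = w) (haw : a * L e - L e * a = w) (N : ℕ) :
    iterComm (quadSeq a e e e) N = a ∧
      iterCommDeriv (quadSeq a e e e) (fun i => L (quadSeq a e e e i)) N =
        (rightComm e ^ N) (L a) + (N : K) • w := by
  have hq : ∀ m, quadSeq a e e e (m + 1) = e := by rintro (_ | _ | m) <;> rfl
  induction N with
  | zero => simp [iterComm, iterCommDeriv, quadSeq]
  | succ N ih =>
    obtain ⟨h1, h2⟩ := ih
    rw [iterComm, iterCommDeriv, h1, h2, hq, pow_succ', Module.End.mul_apply, haw,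
      ← rightComm_apply, ← rightComm_apply, ha, map_add, map_smul, hw]
    refine ⟨rfl, ?_⟩
    push_cast
    rw [add_smul, one_smul, add_assoc]

section RankOne

variable {S : Submodule K (Module.End K V)} {F : Submodule K (V →ₗ[K] K)}
  {L : Module.End K V →ₗ[K] Module.End K V} {N : ℕ} {f : V →ₗ[K] K} {y : V}

theorem smulRight_idem (hy : f y = 1) :
    (f.smulRight y : Module.End K V) * f.smulRight y = f.smulRight y := by
  ext z; simp [hy]

theorem rightComm_smulRight_col (hy : f y = 1) {x : V} (hx : f x = 0) :
    rightComm (f.smulRight y) (f.smulRight x) = f.smulRight x := by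
  ext z; simp [rightComm_apply, hy, hx]

theorem rightComm_smulRight_row (hy : f y = 1) {g : V →ₗ[K] K} (hg : g y = 0) :
    rightComm (f.smulRight y) (g.smulRight y) = -g.smulRight y := by
  ext z; simp [rightComm_apply, hy, hg]

theorem col_rightComm_pow (hy : f y = 1) (M : Module.End K V) (k : ℕ) :
    (rightComm (f.smulRight y) ^ k) M y - f ((rightComm (f.smulRight y) ^ k) M y) • y =
      M y - f (M y) • y := by
  induction k with
  | zero => rfl
  | succ k ih => rw [pow_succ', Module.End.mul_apply, ← ih]; simp [rightComm_apply, hy]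

theorem apply_of_rightComm_range (hy : f y = 1) {M Z : Module.End K V}
    (h : M = rightComm (f.smulRight y) Z) :
    f (M y) = 0 ∧ ∀ x, f x = 0 → M x = f (M x) • y := by
  subst h
  refine ⟨by simp [rightComm_apply, hy], fun x hx => by simp [rightComm_apply, hy, hx]⟩

theorem eq_smul_one_of_apply (hy : f y = 1) {M : Module.End K V} {t : K} (h1 : M y = t • y)
    (h2 : ∀ x, f x = 0 → M x = t • x) : M = t • 1 := by
  ext z
  have hz : z = (z - f z • y) + f z • y := by abel
  have h3 := h2 (z - f z • y) (by simp [hy])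
  conv_lhs => rw [hz, map_add, map_smul, h3, h1]
  simp only [LinearMap.smul_apply, Module.End.one_apply]
  module

/-- An operator commuting with the rank-one idempotent `y ⊗ f` has `f` as left eigenvector. -/
theorem apply_of_rightComm_eq_zero {M : Module.End K V}
    (h : rightComm (f.smulRight y) M = 0) (z : V) : f z • M y = f (M z) • y := by
  have := LinearMap.congr_fun h z
  simpa [rightComm_apply, sub_eq_zero] using this

theorem map_idem_eq_smul_one [CharZero K]
    (hL : IsIterCommDerivOn (S : Set (Module.End K V)) L (N + 2))
    (hy : f y = 1) (hS : ∀ x, (f.smulRight x : Module.End K V) ∈ S)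
    (h0 : rightComm (f.smulRight y) (L (f.smulRight y)) = 0) :
    ∃ t : K, L (f.smulRight y) = t • 1 := by
  have hc := apply_of_rightComm_eq_zero h0
  set l := L (f.smulRight y) with hl
  have hly : l y = f (l y) • y := by simpa [hy] using hc y
  have hfl : ∀ z, f (l z) = f (l y) * f z := by
    intro z
    have := congrArg f (hc z)
    simp only [map_smul, smul_eq_mul, hy, mul_one] at this
    rw [← this, mul_comm]
  refine ⟨f (l y), eq_smul_one_of_apply hy hly fun x hx => ?_⟩
  have hw0 : f (f (l y) • x - l x) = 0 := by simp [hfl x, hx]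
  have haw : (f.smulRight x : Module.End K V) * L (f.smulRight y) -
      L (f.smulRight y) * f.smulRight x = f.smulRight (f (l y) • x - l x) := by
    rw [← hl]
    ext z
    simp only [LinearMap.sub_apply, Module.End.mul_apply, LinearMap.smulRight_apply, map_smul,
      hfl z]
    module
  obtain ⟨h1, h2⟩ := iterCommDeriv_quadSeq_eigen (L := L)
    (rightComm_smulRight_col hy hx) (rightComm_smulRight_col hy hw0) haw (N + 2)
  have h3 := hL (quadSeq (f.smulRight x) (f.smulRight y) (f.smulRight y) (f.smulRight y))
    (by rintro (_ | _ | _ | i) <;> exact hS _)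
  rw [h1, h2] at h3
  have h5 := congrArg (fun M : Module.End K V => M y - f (M y) • y) h3
  simp only [LinearMap.add_apply, LinearMap.smul_apply, LinearMap.smulRight_apply, hy, map_add,
    map_smul, hw0, one_smul, smul_zero, add_zero] at h5
  have h6 := col_rightComm_pow hy (L (f.smulRight x)) (N + 2)
  rw [add_sub_right_comm, h6] at h5
  have h7 : ((N + 2 : ℕ) : K) • (f (l y) • x - l x) = 0 := by
    simpa using h5
  have h8 : ((N + 2 : ℕ) : K) ≠ 0 := by exact_mod_cast (by omega : N + 2 ≠ 0)
  exact (sub_eq_zero.mp ((smul_eq_zero.mp h7).resolve_left h8)).symm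

theorem exists_linearIndependent_pair_of_ker {u v : V} (hu : f u = 0) (hv : f v = 0)
    (huv : LinearIndependent K ![u, v]) {x : V} (hx : x ≠ 0) :
    ∃ z, f z = 0 ∧ LinearIndependent K ![x, z] := by
  by_contra! h
  have key : ∀ z, f z = 0 → ∃ s : K, s • x = z := by
    intro z hz
    have := h z hz
    rw [LinearIndependent.pair_iff' hx] at this
    push Not at this
    exact this
  obtain ⟨s, rfl⟩ := key u hu
  obtain ⟨r, rfl⟩ := key v hv
  have h1 := LinearIndependent.pair_iff.mp huv r (-s) (by module)
  have h2 := huv.ne_zero 0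
  simp [neg_eq_zero.mp h1.2] at h2

theorem doubleComm_col (hy : f y = 1) {M : Module.End K V} (h1 : f (M y) = 0)
    (h2 : ∀ x, f x = 0 → M x = f (M x) • y) {b c : V} (hb : f b = 0) (hc : f c = 0) :
    (M * (f.smulRight b : Module.End K V) - f.smulRight b * M) * f.smulRight c -
        f.smulRight c * (M * (f.smulRight b : Module.End K V) - f.smulRight b * M) =
      f.smulRight (-(f (M b) • c + f (M c) • b)) := by
  ext z
  have h3 : f (M z) = f (M (z - f z • y)) := by simp [h1]
  simp only [LinearMap.sub_apply, Module.End.mul_apply, LinearMap.smulRight_apply, map_smul, hb, hc,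
    map_sub]
  rw [h2 b hb]
  simp only [map_smul, smul_eq_mul, hy]
  module

theorem map_rightComm_pow_idem (hL : IsIterCommDerivOn (S : Set (Module.End K V)) L (N + 2))
    {e : Module.End K V} (heS : e ∈ S) {t : K} (ht : L e = t • 1) {A : Module.End K V}
    (hA : A ∈ S) : L ((rightComm e ^ (N + 2)) A) = (rightComm e ^ (N + 2)) (L A) := by
  have h := hL.map_rightComm_pow heS ht hA heS heS
  simp only [ht, mul_smul_comm, smul_mul_assoc, mul_one, one_mul, sub_self, mul_zero, zero_mul,
    add_zero, ← rightComm_apply] at h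
  rw [pow_succ, pow_succ]
  exact h

/-- `L` maps column operators to column operators. -/
theorem map_col [CharZero K] (hL : IsIterCommDerivOn (S : Set (Module.End K V)) L (N + 2))
    (hy : f y = 1) (hS : ∀ x, (f.smulRight x : Module.End K V) ∈ S)
    {t : K} (ht : L (f.smulRight y) = t • 1)
    (hker : ∃ u v, f u = 0 ∧ f v = 0 ∧ LinearIndependent K ![u, v]) {x : V} (hx : f x = 0) :
    f (L (f.smulRight x) y) = 0 ∧ ∀ z, f z = 0 → L (f.smulRight x) z = 0 := by
  have hoff : ∀ x, f x = 0 → f (L (f.smulRight x) y) = 0 ∧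
      ∀ z, f z = 0 → L (f.smulRight x) z = f (L (f.smulRight x) z) • y := by
    intro x hx
    have h := map_rightComm_pow_idem hL (hS y) ht (hS x)
    rw [rightComm_pow_fixed (rightComm_smulRight_col hy hx), pow_succ', Module.End.mul_apply] at h
    exact apply_of_rightComm_range hy h
  have hrel : ∀ a b c, f a = 0 → f b = 0 → f c = 0 →
      -(f (L (f.smulRight a) b) • c + f (L (f.smulRight a) c) • b) +
        (f (L (f.smulRight b) a) • c + f (L (f.smulRight b) c) • a) = 0 := by
    intro a b c ha hb hc
    have h := hL.map_rightComm_pow (hS y) ht (hS a) (hS b) (hS c)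
    have hab : (f.smulRight a : Module.End K V) * f.smulRight b - f.smulRight b * f.smulRight a =
        0 := by
      ext z; simp [ha, hb]
    have h1 := doubleComm_col hy (hoff a ha).1 (hoff a ha).2 hb hc
    have h2 := doubleComm_col hy (hoff b hb).1 (hoff b hb).2 ha hc
    have h3 : ((f.smulRight a : Module.End K V) * L (f.smulRight b) -
          L (f.smulRight b) * f.smulRight a) * f.smulRight c -
        f.smulRight c * ((f.smulRight a : Module.End K V) * L (f.smulRight b) -
          L (f.smulRight b) * f.smulRight a) =
        -f.smulRight (-(f (L (f.smulRight b) a) • c + f (L (f.smulRight b) c) • a)) := by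
      rw [← h2]; noncomm_ring
    rw [hab, h1, h3] at h
    have h4 : ∀ w, f w = 0 → (rightComm (f.smulRight y) ^ N) (f.smulRight w) = f.smulRight w :=
      fun w hw => rightComm_pow_fixed (rightComm_smulRight_col hy hw) N
    simp only [zero_mul, mul_zero, sub_zero, map_zero, map_add, map_neg, add_zero] at h
    rw [h4 _ (by simp [hb, hc]), h4 _ (by simp [ha, hc])] at h
    have h5 := LinearMap.congr_fun h y
    simp only [LinearMap.zero_apply, LinearMap.add_apply, LinearMap.neg_apply,
      LinearMap.smulRight_apply, hy, one_smul, neg_neg] at h5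
    exact h5.symm
  refine ⟨(hoff x hx).1, fun z hz => ?_⟩
  have hind : ∀ a b, f a = 0 → f b = 0 → LinearIndependent K ![a, b] →
      f (L (f.smulRight b) b) = 0 ∧ f (L (f.smulRight b) a) = 2 * f (L (f.smulRight a) b) := by
    intro a b ha hb hab
    have h := hrel a b b ha hb hb
    have h1 := LinearIndependent.pair_iff.mp hab (f (L (f.smulRight b) b))
      (f (L (f.smulRight b) a) - 2 * f (L (f.smulRight a) b)) (by rw [← h]; module)
    exact ⟨h1.1, sub_eq_zero.mp h1.2⟩
  have hsymm : ∀ a b : V, LinearIndependent K ![a, b] → LinearIndependent K ![b, a] :=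
    fun a b h => LinearIndependent.pair_symm_iff.mp h
  have hzero : f (L (f.smulRight x) z) = 0 := by
    by_cases hx0 : x = 0
    · simp [hx0]
    obtain ⟨u, v, hu, hv, huv⟩ := hker
    by_cases hxz : LinearIndependent K ![x, z]
    · have h1 := (hind x z hx hz hxz).2
      have h2 := (hind z x hz hx (hsymm _ _ hxz)).2
      linear_combination (-1 / 3) * h2 - (2 / 3) * h1
    · rw [LinearIndependent.pair_iff' hx0] at hxz
      push Not at hxz
      obtain ⟨s, rfl⟩ := hxz
      obtain ⟨w, hw, hxw⟩ := exists_linearIndependent_pair_of_ker hu hv huv hx0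
      simp [(hind w x hw hx (hsymm _ _ hxw)).1]
  rw [(hoff x hx).2 z hz, hzero, zero_smul]

/-- If `L` is scalar at the idempotent `y ⊗ f` and kills column operators, then its values
satisfy an eigenvector identity modulo `y`. -/
theorem apply_of_map_col_eq_zero (hL : IsIterCommDerivOn (S : Set (Module.End K V)) L (N + 2))
    (hy : f y = 1) (hS : ∀ x, (f.smulRight x : Module.End K V) ∈ S)
    {t : K} (ht : L (f.smulRight y) = t • 1) (hcol : ∀ x, f x = 0 → L (f.smulRight x) = 0)
    {A : Module.End K V} (hA : A ∈ S) {x : V} (hx : f x = 0) :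
    L A x = f (L A y) • x + f (L A x) • y := by
  have hcomm : ∀ B : Module.End K V,
      (B * (f.smulRight x : Module.End K V) - f.smulRight x * B) * f.smulRight y -
        f.smulRight y * (B * (f.smulRight x : Module.End K V) - f.smulRight x * B) =
      f.smulRight (B x - f (B y) • x - f (B x) • y) := by
    intro B
    ext z
    simp only [LinearMap.sub_apply, Module.End.mul_apply, LinearMap.smulRight_apply, map_smul, hx,
      map_sub, hy]
    module
  have hw : ∀ B : Module.End K V, f (B x - f (B y) • x - f (B x) • y) = 0 := by
    intro B; simp [hx, hy]
  have h := hL.map_rightComm_pow (hS y) ht hA (hS x) (hS y)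
  rw [hcomm, hcomm, hcol x hx, ht, rightComm_pow_fixed (rightComm_smulRight_col hy (hw A)),
    hcol _ (hw A)] at h
  simp only [zero_mul, mul_zero, sub_self, add_zero, mul_smul_comm, smul_mul_assoc, mul_one,
    one_mul] at h
  rw [rightComm_pow_fixed (rightComm_smulRight_col hy (hw (L A)))] at h
  have h1 := LinearMap.congr_fun h y
  simp only [LinearMap.zero_apply, LinearMap.smulRight_apply, hy, one_smul] at h1
  rw [sub_sub] at h1
  exact sub_eq_zero.mp h1.symm

theorem map_diag (hL : IsIterCommDerivOn (S : Set (Module.End K V)) L (N + 2))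
    (hy : f y = 1) (hS : ∀ x, (f.smulRight x : Module.End K V) ∈ S)
    {t : K} (ht : L (f.smulRight y) = t • 1) (hcol : ∀ x, f x = 0 → L (f.smulRight x) = 0)
    {A : Module.End K V} (hA : A ∈ S) (hAd : rightComm (f.smulRight y) A = 0) :
    ∃ c : K, L A = c • 1 := by
  have h := map_rightComm_pow_idem hL (hS y) ht hA
  rw [pow_succ, Module.End.mul_apply, hAd, map_zero, map_zero, ← pow_succ] at h
  have h1 := apply_of_rightComm_eq_zero
    (rightComm_eq_zero_of_pow (smulRight_idem hy) (N + 1) h.symm)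
  refine ⟨f (L A y), eq_smul_one_of_apply hy (by simpa [hy] using h1 y) fun x hx => ?_⟩
  have h2 := apply_of_map_col_eq_zero hL hy hS ht hcol hA hx
  rw [← h1 x, hx, zero_smul, add_zero] at h2
  exact h2

theorem map_row [CharZero K] (hL : IsIterCommDerivOn (S : Set (Module.End K V)) L (N + 2))
    (hy : f y = 1) (hS : ∀ x, (f.smulRight x : Module.End K V) ∈ S)
    {t : K} (ht : L (f.smulRight y) = t • 1) (hcol : ∀ x, f x = 0 → L (f.smulRight x) = 0)
    {g : V →ₗ[K] K} (hg : g y = 0) (hgS : ∀ x, (g.smulRight x : Module.End K V) ∈ S)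
    (hfg : ∃ z, z ≠ 0 ∧ f z = 0 ∧ g z = 0) : L (g.smulRight y) = 0 := by
  have hrow := rightComm_smulRight_row hy hg
  set M := L (g.smulRight y) with hM
  have hMd : M = rightComm (f.smulRight y)
      ((-1 : K) ^ N • (rightComm (f.smulRight y) ^ (N + 1)) M) := by
    have h := map_rightComm_pow_idem hL (hS y) ht (hgS y)
    rw [rightComm_pow_neg hrow, map_smul, ← hM] at h
    rw [map_smul, ← Module.End.mul_apply, ← pow_succ', ← h, smul_smul, ← pow_add,
      Even.neg_one_pow (by grind), one_smul]
  obtain ⟨hy0, hoff⟩ := apply_of_rightComm_range hy hMd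
  have hgoff : ∀ x, f x = 0 → (g.smulRight y : Module.End K V) x =
      f ((g.smulRight y : Module.End K V) x) • y := fun x _ => by simp [hy]
  have hMker : ∀ x, f x = 0 → M x = 0 := by
    intro x hx
    have h := hL.map_rightComm_pow (hS y) ht (hgS y) (hS x) (hS x)
    rw [hcol x hx, ← hM, doubleComm_col hy hy0 hoff hx hx,
      doubleComm_col hy (by simp [hg]) hgoff hx hx] at h
    simp only [mul_zero, zero_mul, sub_self, add_zero] at h
    rw [rightComm_pow_fixed (rightComm_smulRight_col hy (by simp [hx])),
      rightComm_pow_fixed (rightComm_smulRight_col hy (by simp [hx])), hcol _ (by simp [hx])] at h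
    have h1 := LinearMap.congr_fun h y
    have h2 : (2 * f (M x)) • x = 0 := by
      simp only [LinearMap.zero_apply, LinearMap.smulRight_apply, hy, one_smul] at h1
      rw [zero_eq_neg] at h1
      rw [← h1]; module
    rcases smul_eq_zero.mp h2 with h3 | rfl
    · rw [hoff x hx, (mul_eq_zero.mp h3).resolve_left two_ne_zero, zero_smul]
    · simp
  have hMcol : M = f.smulRight (M y) := by
    ext z
    have := hMker (z - f z • y) (by simp [hy])
    rw [map_sub, map_smul, sub_eq_zero] at this
    exact this
  have hrel : ∀ x, f x = 0 → (g x * (-1) ^ N) • M y = g (M y) • x := by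
    intro x hx
    obtain ⟨c, hc⟩ := map_diag hL hy hS ht hcol (hgS x)
      (by ext z; simp [rightComm_apply, hx, hg])
    have h := hL.map_rightComm_pow (hS y) ht (hgS y) (hgS x) (hS y)
    have h1 : ((g.smulRight y : Module.End K V) * g.smulRight x -
          g.smulRight x * g.smulRight y) * f.smulRight y -
        f.smulRight y * ((g.smulRight y : Module.End K V) * g.smulRight x -
          g.smulRight x * g.smulRight y) = (-g x) • g.smulRight y := by
      ext z; simp [hg, hy]; module
    have h2 : (M * (g.smulRight x : Module.End K V) -
          g.smulRight x * M) * f.smulRight y -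
        f.smulRight y * (M * (g.smulRight x : Module.End K V) -
          g.smulRight x * M) = (-g (M y)) • f.smulRight x := by
      rw [hMcol]
      ext z; simp [hx, hg, hy]; module
    rw [hc, ht, ← hM, h1, h2] at h
    simp only [mul_smul_comm, smul_mul_assoc, mul_one, one_mul, sub_self, mul_zero, zero_mul,
      add_zero, map_smul, rightComm_pow_neg hrow,
      rightComm_pow_fixed (rightComm_smulRight_col hy hx), ← hM] at h
    have h3 := LinearMap.congr_fun h y
    simp only [LinearMap.smul_apply, LinearMap.smulRight_apply, hy, one_smul] at h3
    rw [mul_smul, ← neg_inj, ← neg_smul, h3, neg_smul]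
  obtain ⟨z, hz0, hfz, hgz⟩ := hfg
  have hgM : g (M y) = 0 := by
    have := hrel z hfz
    rw [hgz, zero_mul, zero_smul] at this
    exact (smul_eq_zero.mp this.symm).resolve_right hz0
  by_cases hMy : M y = 0
  · rw [hMcol, hMy]; simp
  · have hg0 : g = 0 := by
      ext x
      have := hrel (x - f x • y) (by simp [hy])
      rw [hgM, zero_smul, smul_eq_zero, or_iff_left hMy, mul_eq_zero,
        or_iff_left (pow_ne_zero _ (by simp))] at this
      simpa [hg] using this
    rw [hM, hg0]; simp

theorem exists_inner_add_scalar_of_three_le [CharZero K]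
    (hL : IsIterCommDerivOn (S : Set (Module.End K V)) L (N + 2))
    (hFS : ∀ g ∈ F, ∀ x, (g.smulRight x : Module.End K V) ∈ S)
    (hFA : ∀ g ∈ F, ∀ A ∈ S, g ∘ₗ A ∈ F)
    (hf : f ∈ F) (hy : f y = 1)
    (hker : ∃ u v, f u = 0 ∧ f v = 0 ∧ LinearIndependent K ![u, v])
    (hker₂ : ∀ g ∈ F, ∃ z, z ≠ 0 ∧ f z = 0 ∧ g z = 0) :
    ∃ T : Module.End K V, ∀ A ∈ S, ∃ c : K, L A = T * A - A * T + c • 1 := by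
  have hS := hFS f hf
  set e : Module.End K V := f.smulRight y with he
  have hee : e * e = e := smulRight_idem hy
  set L₁ := L + rightComm (rightComm e (L e)) with hL₁
  have hd₁ : IsIterCommDerivOn (S : Set (Module.End K V)) L₁ (N + 2) := hL.sub_inner _
  have hdiag : rightComm e (L₁ e) = 0 := by
    have h : L₁ e = L e - rightComm e (rightComm e (L e)) := by
      rw [hL₁, LinearMap.add_apply, rightComm_apply (rightComm e (L e)) e,
        rightComm_apply e (rightComm e (L e))]
      abel
    rw [h, map_sub, rightComm_cube hee, sub_self]
  obtain ⟨t, ht⟩ := map_idem_eq_smul_one hd₁ hy hS hdiag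
  set T₂ : Module.End K V :=
    LinearMap.applyₗ y ∘ₗ L₁ ∘ₗ LinearMap.smulRightₗ f ∘ₗ (1 - e) with hT₂
  have hT₂_apply : ∀ x, T₂ x = L₁ (f.smulRight (x - f x • y)) y := fun x => rfl
  have hproj : ∀ x, f (x - f x • y) = 0 := fun x => by simp [hy]
  have hfT : ∀ x, f (T₂ x) = 0 := fun x => by
    rw [hT₂_apply]; exact (map_col hd₁ hy hS ht hker (hproj x)).1
  have hTy : T₂ y = 0 := by
    have h : (f.smulRight (y - f y • y) : Module.End K V) = 0 := by ext z; simp [hy]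
    rw [hT₂_apply, h, map_zero, LinearMap.zero_apply]
  set L₂ := L₁ + rightComm T₂ with hL₂
  have hd₂ : IsIterCommDerivOn (S : Set (Module.End K V)) L₂ (N + 2) := hd₁.sub_inner _
  have ht₂ : L₂ e = t • 1 := by
    have h : rightComm T₂ e = 0 := by ext z; simp [rightComm_apply, he, hfT, hTy]
    rw [hL₂, LinearMap.add_apply, ht, h, add_zero]
  have hcol : ∀ x, f x = 0 → L₂ (f.smulRight x) = 0 := by
    intro x hx
    have hTx : T₂ x = L₁ (f.smulRight x) y := by rw [hT₂_apply, hx, zero_smul, sub_zero]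
    ext z
    have h := (map_col hd₁ hy hS ht hker hx).2 _ (hproj z)
    rw [map_sub, map_smul, sub_eq_zero] at h
    simp [hL₂, rightComm_apply, hfT, hTx, h]
  refine ⟨T₂ + rightComm e (L e), fun A hA => ?_⟩
  set g : V →ₗ[K] K := f ∘ₗ A - f (A y) • f with hg
  have hgF : g ∈ F := F.sub_mem (hFA f hf A hA) (F.smul_mem _ hf)
  have hgy : g y = 0 := by simp [hg, hy]
  set x := A y - f (A y) • y with hx
  have hfx : f x = 0 := hproj _
  have hBS : A - f.smulRight x - g.smulRight y ∈ S :=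
    S.sub_mem (S.sub_mem hA (hS x)) (hFS g hgF y)
  have hBd : rightComm e (A - f.smulRight x - g.smulRight y) = 0 := by
    ext z
    simp [rightComm_apply, he, hg, hx, hy]
    module
  obtain ⟨c, hc⟩ := map_diag hd₂ hy hS ht₂ hcol hBS hBd
  rw [map_sub, map_sub, hcol x hfx,
    map_row hd₂ hy hS ht₂ hcol hgy (hFS g hgF) (hker₂ g hgF), sub_zero, sub_zero] at hc
  refine ⟨c, ?_⟩
  rw [← hc, hL₂, hL₁]
  simp only [LinearMap.add_apply, rightComm_apply]
  noncomm_ring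

theorem IsIterCommDerivOn.two_of_one {R : Type*} [Ring R] {S : Set R} {L : R → R}
    (hmul : ∀ A ∈ S, ∀ B ∈ S, A * B - B * A ∈ S) (hL : IsIterCommDerivOn S L 1) :
    IsIterCommDerivOn S L 2 := by
  have h : ∀ A ∈ S, ∀ B ∈ S, L (A * B - B * A) = (L A * B - B * L A) + (A * L B - L B * A) := by
    intro A hA B hB
    exact hL (fun i => if i = 0 then A else B) (fun i => by split_ifs <;> assumption)
  intro a ha
  simp only [iterComm, iterCommDeriv]
  rw [h _ (hmul _ (ha 0) _ (ha 1)) _ (ha 2), h _ (ha 0) _ (ha 1)]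

theorem exists_inner_add_scalar [CharZero K] {k : ℕ} (hk : 1 ≤ k)
    (hL : IsIterCommDerivOn (S : Set (Module.End K V)) L k)
    (hmul : ∀ A ∈ S, ∀ B ∈ S, A * B ∈ S)
    (hFS : ∀ g ∈ F, ∀ x, (g.smulRight x : Module.End K V) ∈ S)
    (hFA : ∀ g ∈ F, ∀ A ∈ S, g ∘ₗ A ∈ F)
    (hf : f ∈ F) (hy : f y = 1)
    (hker : ∃ u v, f u = 0 ∧ f v = 0 ∧ LinearIndependent K ![u, v])
    (hker₂ : ∀ g ∈ F, ∃ z, z ≠ 0 ∧ f z = 0 ∧ g z = 0) :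
    ∃ T : Module.End K V, ∀ A ∈ S, ∃ c : K, L A = T * A - A * T + c • 1 := by
  obtain rfl | ⟨N, rfl⟩ : k = 1 ∨ ∃ N, k = N + 2 := by
    rcases hk.eq_or_lt with h | h
    · exact Or.inl h.symm
    · exact Or.inr ⟨k - 2, by omega⟩
  · exact exists_inner_add_scalar_of_three_le (N := 0)
      (hL.two_of_one fun A hA B hB => S.sub_mem (hmul A hA B hB) (hmul B hB A hA))
      hFS hFA hf hy hker hker₂
  · exact exists_inner_add_scalar_of_three_le hL hFS hFA hf hy hker hker₂

end RankOne

end Core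
section BoundedOperators

variable {X : Type*} [NormedAddCommGroup X] [NormedSpace ℂ X]
  {𝒜 : NonUnitalSubalgebra ℂ (X →L[ℂ] X)} {L : 𝒜 →ₗ[ℂ] (X →L[ℂ] X)}

/-- The forgetful ring homomorphism from bounded operators to linear maps. -/
def coeEnd : (X →L[ℂ] X) →ₙ+* Module.End ℂ X where
  toFun A := A
  map_mul' _ _ := rfl
  map_zero' := rfl
  map_add' _ _ := rfl

theorem IsLieNDerivNU.map_iterComm {k : ℕ} (hL : IsLieNDerivNU 𝒜 (k + 1) L) (a : ℕ → 𝒜) :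
    L (iterComm a k) = iterCommDeriv (fun i => (a i : X →L[ℂ] X)) (fun i => L (a i)) k := by
  have h := hL fun i : Fin (k + 1) => a i
  rwa [commPoly_eq_iterComm, sum_commPoly_update_eq_iterCommDeriv
    (fun i => (a i : X →L[ℂ] X)) (fun i => L (a i))] at h

theorem coe_iterComm (a : ℕ → 𝒜) (k : ℕ) :
    ((iterComm a k : 𝒜) : X →L[ℂ] X) = iterComm (fun i => (a i : X →L[ℂ] X)) k :=
  _root_.map_iterComm (NonUnitalSubalgebraClass.subtype 𝒜 : 𝒜 →ₙ+* (X →L[ℂ] X)) a k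

theorem exists_inner_add_scalar_of_isLieNDerivNU (F : Submodule ℂ (X →L[ℂ] ℂ))
    (hFS : ∀ g ∈ F, ∀ x, g.smulRight x ∈ 𝒜)
    (hFA : ∀ g ∈ F, ∀ A : 𝒜, g.comp (A : X →L[ℂ] X) ∈ F)
    {f : X →L[ℂ] ℂ} (hf : f ∈ F) (hf0 : f ≠ 0)
    (hker : ∃ u v, f u = 0 ∧ f v = 0 ∧ LinearIndependent ℂ ![u, v])
    (hker₂ : ∀ g ∈ F, ∃ z, z ≠ 0 ∧ f z = 0 ∧ g z = 0)
    {n : ℕ} (hn : 2 ≤ n) (hL : IsLieNDerivNU 𝒜 n L) :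
    ∃ T : Module.End ℂ X, ∀ A : 𝒜, ∃ c : ℂ,
      (L A : Module.End ℂ X) = T * (A : X →L[ℂ] X) - (A : X →L[ℂ] X) * T + c • 1 := by
  obtain ⟨k, rfl⟩ : ∃ k, n = k + 1 := ⟨n - 1, by omega⟩
  obtain ⟨w, hw⟩ : ∃ w, f w ≠ 0 := by
    by_contra! h
    exact hf0 (ContinuousLinearMap.ext h)
  obtain ⟨G, hG⟩ := LinearMap.exists_extend (p := 𝒜.toSubmodule) L
  let ι : (X →L[ℂ] X) →ₗ[ℂ] Module.End ℂ X := ContinuousLinearMap.coeLM ℂ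
  obtain ⟨ρ, hρ⟩ := ι.exists_leftInverse_of_injective
    (LinearMap.ker_eq_bot.mpr ContinuousLinearMap.coe_injective)
  let L' : Module.End ℂ X →ₗ[ℂ] Module.End ℂ X := ι ∘ₗ G ∘ₗ ρ
  have hL' : ∀ A : 𝒜, L' ((A : X →L[ℂ] X) : Module.End ℂ X) = (L A : Module.End ℂ X) := by
    intro A
    have h1 : ρ ((A : X →L[ℂ] X) : Module.End ℂ X) = A := LinearMap.congr_fun hρ (A : X →L[ℂ] X)
    have h2 : G (A : X →L[ℂ] X) = L A := LinearMap.congr_fun hG A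
    change ι (G (ρ ((A : X →L[ℂ] X) : Module.End ℂ X))) = _
    rw [h1, h2]
    rfl
  have hS : ∀ A : 𝒜, ((A : X →L[ℂ] X) : Module.End ℂ X) ∈ 𝒜.toSubmodule.map ι :=
    fun A => ⟨A, A.2, rfl⟩
  have hder : IsIterCommDerivOn (𝒜.toSubmodule.map ι : Set (Module.End ℂ X)) L' k := by
    intro a ha
    choose b hb hba using ha
    let b' : ℕ → 𝒜 := fun i => ⟨b i, hb i⟩
    obtain rfl : a = fun i => coeEnd (b' i : X →L[ℂ] X) := funext fun i => (hba i).symm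
    rw [← _root_.map_iterComm, ← coe_iterComm]
    have h := congrArg coeEnd (hL.map_iterComm b')
    rw [map_iterCommDeriv] at h
    refine (hL' _).trans (h.trans ?_)
    congr 1
    funext i
    exact (hL' _).symm
  obtain ⟨T, hT⟩ := exists_inner_add_scalar (F := F.map (ContinuousLinearMap.coeLM ℂ))
    (f := f) (y := (f w)⁻¹ • w) (by omega) hder
    (by
      rintro _ ⟨A, hA, rfl⟩ _ ⟨B, hB, rfl⟩
      exact ⟨A * B, 𝒜.mul_mem hA hB, rfl⟩)
    (by
      rintro _ ⟨g, hg, rfl⟩ x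
      exact ⟨g.smulRight x, hFS g hg x, rfl⟩)
    (by
      rintro _ ⟨g, hg, rfl⟩ _ ⟨A, hA, rfl⟩
      exact ⟨g.comp A, hFA g hg ⟨A, hA⟩, rfl⟩)
    ⟨f, hf, rfl⟩ (by simp [hw]) hker
    (by
      rintro _ ⟨g, hg, rfl⟩
      exact hker₂ g hg)
  exact ⟨T, fun A => by
    obtain ⟨c, hc⟩ := hT _ (hS A)
    exact ⟨c, by rw [← hL', hc]⟩⟩

variable {T : Module.End ℂ X}

theorem exists_linearMap_coe_eq_comm
    (hT : ∀ A : 𝒜, ∃ c : ℂ,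
      (L A : Module.End ℂ X) = T * (A : X →L[ℂ] X) - (A : X →L[ℂ] X) * T + c • 1) :
    ∃ D : 𝒜 →ₗ[ℂ] (X →L[ℂ] X), ∀ A : 𝒜,
      (D A : Module.End ℂ X) = T * (A : X →L[ℂ] X) - (A : X →L[ℂ] X) * T := by
  have h : ∀ A : 𝒜, ∃ B : X →L[ℂ] X,
      (B : Module.End ℂ X) = T * (A : X →L[ℂ] X) - (A : X →L[ℂ] X) * T := by
    intro A
    obtain ⟨c, hc⟩ := hT A
    refine ⟨L A - c • 1, ?_⟩
    rw [ContinuousLinearMap.toLinearMap_sub, hc]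
    exact add_sub_cancel_right _ _
  choose D hD using h
  have hD' : ∀ (A : 𝒜) z, D A z = T ((A : X →L[ℂ] X) z) - (A : X →L[ℂ] X) (T z) :=
    fun A z => LinearMap.congr_fun (hD A) z
  refine ⟨⟨⟨D, fun A B => ?_⟩, fun c A => ?_⟩, hD⟩
  · ext z
    simp [hD']
    abel
  · ext z
    simp [hD', smul_sub]

theorem map_commPoly_eq_zero {n : ℕ} (hn : 2 ≤ n) (hL : IsLieNDerivNU 𝒜 n L)
    (hT : ∀ A : 𝒜, ∃ c : ℂ,
      (L A : Module.End ℂ X) = T * (A : X →L[ℂ] X) - (A : X →L[ℂ] X) * T + c • 1)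
    {D : 𝒜 →ₗ[ℂ] (X →L[ℂ] X)}
    (hD : ∀ A : 𝒜, (D A : Module.End ℂ X) = T * (A : X →L[ℂ] X) - (A : X →L[ℂ] X) * T)
    (a : Fin n → 𝒜) : (L - D) (commPoly n a) = 0 := by
  obtain ⟨k, rfl⟩ : ∃ k, n = k + 2 := ⟨n - 2, by omega⟩
  obtain ⟨b, rfl⟩ : ∃ b : ℕ → 𝒜, a = fun i : Fin (k + 2) => b i :=
    ⟨fun i => if h : i < k + 2 then a ⟨i, h⟩ else 0, by funext i; simp⟩
  have hP := congrArg coeEnd (coe_iterComm b (k + 1))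
  rw [_root_.map_iterComm] at hP
  have h := congrArg coeEnd (hL.map_iterComm b)
  rw [map_iterCommDeriv] at h
  have hDP : coeEnd (D (iterComm b (k + 1))) =
      iterCommDeriv (fun i => coeEnd (b i : X →L[ℂ] X)) (fun i => coeEnd (D (b i))) (k + 1) := by
    have h1 : ∀ A : 𝒜, coeEnd (D A) =
      T * coeEnd (A : X →L[ℂ] X) - coeEnd (A : X →L[ℂ] X) * T := hD
    simp only [h1]
    rw [iterCommDeriv_inner, hP]
  rw [commPoly_eq_iterComm]
  apply ContinuousLinearMap.coe_injective
  change coeEnd ((L - D) _) = 0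
  rw [LinearMap.sub_apply, map_sub, h, hDP, ← iterCommDeriv_sub]
  refine iterCommDeriv_central _ _ (fun i x => ?_) k
  obtain ⟨c, hc⟩ := hT (b i)
  have h2 : coeEnd (L (b i)) - coeEnd (D (b i)) = c • 1 := by
    change (L (b i) : Module.End ℂ X) - (D (b i) : Module.End ℂ X) = _
    rw [hc, hD, add_sub_cancel_left]
  rw [h2]
  simp

theorem continuous_of_coe_eq_comm {f : X →L[ℂ] ℂ} (hf : ∀ x, f.smulRight x ∈ 𝒜) (hf0 : f ≠ 0)
    {u : X} (hu0 : u ≠ 0) (hu : f u = 0)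
    (hT : ∀ A : 𝒜, ∃ c : ℂ,
      (L A : Module.End ℂ X) = T * (A : X →L[ℂ] X) - (A : X →L[ℂ] X) * T + c • 1)
    {D : 𝒜 →ₗ[ℂ] (X →L[ℂ] X)}
    (hD : ∀ A : 𝒜, (D A : Module.End ℂ X) = T * (A : X →L[ℂ] X) - (A : X →L[ℂ] X) * T)
    (hL : Continuous L) : Continuous D := by
  obtain ⟨w, hw⟩ : ∃ w, f w ≠ 0 := by
    by_contra! h
    exact hf0 (ContinuousLinearMap.ext h)
  obtain ⟨φ, hφ⟩ := SeparatingDual.exists_eq_one (R := ℂ) hu0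
  have hcont : Continuous fun x => L ⟨f.smulRight x, hf x⟩ :=
    hL.comp (Continuous.subtype_mk (ContinuousLinearMap.smulRightL ℂ X X f).continuous _)
  have hcontv : ∀ v, Continuous fun x => L ⟨f.smulRight x, hf x⟩ v :=
    fun v => hcont.clm_apply continuous_const
  have hTx : ∀ x, T x = (f w)⁻¹ • (L ⟨f.smulRight x, hf x⟩ w + f (T w) • x -
      φ (L ⟨f.smulRight x, hf x⟩ u + f (T u) • x) • w) := by
    intro x
    obtain ⟨c, hc⟩ := hT ⟨f.smulRight x, hf x⟩
    have h : ∀ v, L ⟨f.smulRight x, hf x⟩ v = f v • T x - f (T v) • x + c • v := by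
      intro v
      have := LinearMap.congr_fun hc v
      simpa using this
    rw [h, h, hu]
    simp only [zero_smul, zero_sub, neg_add_cancel_comm, map_smul, hφ, smul_eq_mul, mul_one]
    rw [show f w • T x - f (T w) • x + c • w + f (T w) • x - c • w = f w • T x by abel,
      smul_smul, inv_mul_cancel₀ hw, one_smul]
  have hTc : Continuous T := by
    rw [show ⇑T = fun x => _ from funext hTx]
    have := hcontv w
    have := hcontv u
    fun_prop
  let T' : X →L[ℂ] X := ⟨T, hTc⟩
  have hDeq : ⇑D = fun A : 𝒜 => T' * (A : X →L[ℂ] X) - (A : X →L[ℂ] X) * T' :=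
    funext fun A => ContinuousLinearMap.coe_injective (hD A)
  rw [hDeq]
  fun_prop

end BoundedOperators

/-- (Theorem 3.11 of the paper.)  Let `X` be a complex Banach space
with `dim X > 2`, `𝒩` a non-trivial nest on `X`, and `𝒜` a subalgebra of `Alg 𝒩`
satisfying (♠1)–(♠6) with `dim X₋^⊥(𝒜) > 1`.  Then every Lie `n`-derivation
`L : 𝒜 → B(X)` (`n ≥ 2`) decomposes as `L = D + H` with `D` a derivation and `H` a
linear map into `ℂ I` vanishing on all `(n-1)`-th commutators; moreover, if `L` is
continuous then `D, H` can be chosen continuous. -/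
theorem statement13 {X : Type*} [NormedAddCommGroup X] [NormedSpace ℂ X] [CompleteSpace X]
    (hdim : 2 < Module.rank ℂ X)
    (𝒩 : Set (Submodule ℂ X)) (hnest : IsNest 𝒩)
    (hnontrivial : 𝒩 ≠ ({⊥, ⊤} : Set (Submodule ℂ X)))
    (𝒜 : NonUnitalSubalgebra ℂ (X →L[ℂ] X))
    (h𝒜 : ∀ T ∈ 𝒜, T ∈ nestAlgebra 𝒩)
    -- (♠1) : `X₋^⊥(𝒜) ≠ {0}` and `X₋^⊥(𝒜)` is a linear subspace of `X*`
    (hS1 : XannA 𝒩 𝒜 ≠ ({0} : Set (X →L[ℂ] ℂ)) ∧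
      ∃ p : Submodule ℂ (X →L[ℂ] ℂ), (p : Set (X →L[ℂ] ℂ)) = XannA 𝒩 𝒜)
    -- (♠2) : for each `f ∈ X₋^⊥(𝒜)` there exists `y ∈ X \ X₋` with `y ⊗ f ∈ 𝒜`
    (hS2 : ∀ f ∈ XannA 𝒩 𝒜, ∃ y : X, y ∉ nestXminus 𝒩 ∧ f.smulRight y ∈ 𝒜)
    -- (♠3) : `x ⊗ f ∈ 𝒜` for every `x ∈ X(𝒜)` and `f ∈ X₋^⊥(𝒜)`
    (hS3 : ∀ x ∈ XofA 𝒜, ∀ f ∈ XannA 𝒩 𝒜, f.smulRight x ∈ 𝒜)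
    -- (♠4) : `dim(X(𝒜) ∩ ker fᵢ) > 1` and `X(𝒜) ∩ ker f₁ ∩ ker f₂ ≠ {0}`
    (hS4 : ∀ f₁ ∈ XannA 𝒩 𝒜, ∀ f₂ ∈ XannA 𝒩 𝒜,
      (∃ u v : X, u ∈ XofA 𝒜 ∧ f₁ u = 0 ∧ v ∈ XofA 𝒜 ∧ f₁ v = 0 ∧
        LinearIndependent ℂ ![u, v]) ∧
      (∃ u v : X, u ∈ XofA 𝒜 ∧ f₂ u = 0 ∧ v ∈ XofA 𝒜 ∧ f₂ v = 0 ∧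
        LinearIndependent ℂ ![u, v]) ∧
      (∃ z : X, z ≠ 0 ∧ z ∈ XofA 𝒜 ∧ f₁ z = 0 ∧ f₂ z = 0))
    -- (♠5) : `X(𝒜) = X`
    (hS5 : XofA 𝒜 = Set.univ)
    -- (♠6) : `𝒜 X(𝒜) ⊆ X(𝒜)` and `𝒜* X₋^⊥(𝒜) ⊆ X₋^⊥(𝒜)`
    (hS6 : (∀ A : ↥𝒜, ∀ x ∈ XofA 𝒜, (A : X →L[ℂ] X) x ∈ XofA 𝒜) ∧
      (∀ A : ↥𝒜, ∀ f ∈ XannA 𝒩 𝒜, f.comp (A : X →L[ℂ] X) ∈ XannA 𝒩 𝒜))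
    -- `dim X₋^⊥(𝒜) > 1`
    (hdimannA : ∃ f g : X →L[ℂ] ℂ, f ∈ XannA 𝒩 𝒜 ∧ g ∈ XannA 𝒩 𝒜 ∧
      LinearIndependent ℂ ![f, g])
    (n : ℕ) (hn : 2 ≤ n)
    (L : ↥𝒜 →ₗ[ℂ] (X →L[ℂ] X)) (hL : IsLieNDerivNU 𝒜 n L) :
    (∃ D H : ↥𝒜 →ₗ[ℂ] (X →L[ℂ] X),
        IsDerivOnNU 𝒜 D ∧
        (∀ a : ↥𝒜, ∃ c : ℂ, H a = c • (1 : X →L[ℂ] X)) ∧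
        (∀ a : Fin n → ↥𝒜, H (commPoly n a) = 0) ∧
        L = D + H) ∧
    (Continuous L →
      ∃ D H : ↥𝒜 →ₗ[ℂ] (X →L[ℂ] X),
        IsDerivOnNU 𝒜 D ∧
        (∀ a : ↥𝒜, ∃ c : ℂ, H a = c • (1 : X →L[ℂ] X)) ∧
        (∀ a : Fin n → ↥𝒜, H (commPoly n a) = 0) ∧
        L = D + H ∧ Continuous D ∧ Continuous H) := by
  obtain ⟨p, hp⟩ := hS1.2
  have hmemp : ∀ {g : X →L[ℂ] ℂ}, g ∈ p ↔ g ∈ XannA 𝒩 𝒜 := fun {g} => by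
    rw [← hp]; exact Iff.rfl
  obtain ⟨f, _, hf, -, hlin⟩ := hdimannA
  have hf0 : f ≠ 0 := hlin.ne_zero 0
  have hX : ∀ x, x ∈ XofA 𝒜 := fun x => hS5 ▸ Set.mem_univ x
  obtain ⟨T, hT⟩ := exists_inner_add_scalar_of_isLieNDerivNU p
    (fun g hg x => hS3 x (hX x) g (hmemp.mp hg))
    (fun g hg A => hmemp.mpr (hS6.2 A g (hmemp.mp hg))) (hmemp.mpr hf) hf0
    (by
      obtain ⟨u, v, -, hu, -, hv, huv⟩ := (hS4 f hf f hf).1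
      exact ⟨u, v, hu, hv, huv⟩)
    (fun g hg => by
      obtain ⟨z, hz, -, h1, h2⟩ := (hS4 f hf g (hmemp.mp hg)).2.2
      exact ⟨z, hz, h1, h2⟩) hn hL
  obtain ⟨u, _, -, hu, -, -, huv⟩ := (hS4 f hf f hf).1
  obtain ⟨D, hDT⟩ := exists_linearMap_coe_eq_comm hT
  have hsub : ∀ A : 𝒜, ∃ c : ℂ, (L - D) A = c • (1 : X →L[ℂ] X) := by
    intro A
    obtain ⟨c, hc⟩ := hT A
    refine ⟨c, ContinuousLinearMap.coe_injective ?_⟩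
    rw [LinearMap.sub_apply, ContinuousLinearMap.toLinearMap_sub, hDT, hc, add_sub_cancel_left]
    rfl
  have hder : IsDerivOnNU 𝒜 D := by
    intro A B
    apply ContinuousLinearMap.coe_injective
    ext z
    have h := fun A : 𝒜 => fun z => LinearMap.congr_fun (hDT A) z
    simp only [ContinuousLinearMap.coe_coe, LinearMap.sub_apply, Module.End.mul_apply] at h
    simp [h]
  have hvan : ∀ a : Fin n → 𝒜, (L - D) (commPoly n a) = 0 :=
    map_commPoly_eq_zero hn hL hT hDT
  refine ⟨⟨D, L - D, hder, hsub, hvan, (add_sub_cancel D L).symm⟩, fun hLc => ?_⟩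
  have hDc : Continuous D :=
    continuous_of_coe_eq_comm (fun x => hS3 x (hX x) f hf) hf0 (huv.ne_zero 0) hu hT hDT hLc
  exact ⟨D, L - D, hder, hsub, hvan, (add_sub_cancel D L).symm, hDc, hLc.sub hDc⟩
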